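/- Let μ₁, μ₂, μ₃ : ℂ³ → ℝ be as defined. At a point z = (z₁, z₂, z₃) ∈ ℂ³, the three gradient vectors ∇μ₁(z), ∇μ₂(z), ∇μ₃(z) ∈ ℝ⁶ are linearly independent (equivalently, the real derivative D(μ₁, μ₂, μ₃)_z : ℝ⁶ → ℝ³ is surjective) if and only if (z₁, z₂) ≠ (0, 0). -/

import Mathlib

open Complex

/-- Partial derivative `∂f/∂x_k` of `f : ℝ³ × ℝ³ → ℝ` in the real coordinates
`(x₁, x₂, x₃, y₁, y₂, y₃)` on `ℂ³ ≅ ℝ⁶`. -/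
noncomputable def pdx (f : (Fin 3 → ℝ) → (Fin 3 → ℝ) → ℝ) (k : Fin 3)
    (x y : Fin 3 → ℝ) : ℝ :=
  deriv (fun t => f (Function.update x k t) y) (x k)

/-- Partial derivative `∂f/∂y_k`. -/
noncomputable def pdy (f : (Fin 3 → ℝ) → (Fin 3 → ℝ) → ℝ) (k : Fin 3)
    (x y : Fin 3 → ℝ) : ℝ :=
  deriv (fun t => f x (Function.update y k t)) (y k)

/-- The gradient of `f` at `(x, y)`, as an element of `ℝ³ × ℝ³ ≅ ℝ⁶`. -/
noncomputable def grad (f : (Fin 3 → ℝ) → (Fin 3 → ℝ) → ℝ)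
    (x y : Fin 3 → ℝ) : (Fin 3 → ℝ) × (Fin 3 → ℝ) :=
  (fun k => pdx f k x y, fun k => pdy f k x y)

/-- The functions `μ₁, μ₂, μ₃ : ℂ³ → ℝ` (in real coordinates `z_j = x_j + i y_j`). -/
noncomputable def mu : Fin 3 → (Fin 3 → ℝ) → (Fin 3 → ℝ) → ℝ :=
  ![fun x y => x 2 - (x 0 ^ 2 + y 0 ^ 2) / 2,
    fun x y => x 2 - (x 1 ^ 2 + y 1 ^ 2) / 2,
    fun x y => Real.exp (x 2) *
      ((x 0 * y 1 + x 1 * y 0) * Real.cos (y 2) + (x 0 * x 1 - y 0 * y 1) * Real.sin (y 2))]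

/-! `∇μ₃` is orthogonal to `∇μ₁` and `∇μ₂`: the flow `z₁ ↦ e⁻ˢ z₁`, `z₃ ↦ z₃ + s` preserves
`z₁ z₂ e^{z₃}` and has velocity `∇μ₁` at `s = 0`, and likewise with `z₂` in place of `z₁` for `∇μ₂`.
With `p = |z₁|²` and `q = |z₂|²`, the Gram matrix of the three gradients therefore has the diagonal
blocks `!![1 + p, 1; 1, 1 + q]` and `|∇μ₃|² = e^{2 x₃} (p + q + p q)`, so its determinant is
`e^{2 x₃} (p + q + p q)²`, which vanishes exactly when `z₁ = z₂ = 0`. -/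

section ProdEuclidean

variable (m n : Type*)

/-- The linear identification of `ℝᵐ × ℝⁿ` with Euclidean `ℝᵐ⁺ⁿ`, which supplies the inner product
missing on `(m → ℝ) × (n → ℝ)`. -/
noncomputable def prodEquivEuclidean :
    ((m → ℝ) × (n → ℝ)) ≃ₗ[ℝ] EuclideanSpace ℝ (m ⊕ n) :=
  (LinearEquiv.sumArrowLequivProdArrow m n ℝ ℝ).symm ≪≫ₗ (WithLp.linearEquiv 2 ℝ (m ⊕ n → ℝ)).symm

variable {m n}

theorem inner_prodEquivEuclidean [Fintype m] [Fintype n] (v w : (m → ℝ) × (n → ℝ)) :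
    inner ℝ (prodEquivEuclidean m n v) (prodEquivEuclidean m n w) =
      v.1 ⬝ᵥ w.1 + v.2 ⬝ᵥ w.2 := by
  obtain ⟨v₁, v₂⟩ := v
  obtain ⟨w₁, w₂⟩ := w
  simp [prodEquivEuclidean, PiLp.inner_apply, dotProduct, mul_comm]

theorem linearIndependent_iff_det_gram_prodEquivEuclidean_ne_zero {ι : Type*} [Fintype ι]
    [DecidableEq ι] [Fintype m] [Fintype n] (v : ι → (m → ℝ) × (n → ℝ)) :
    LinearIndependent ℝ v ↔ (Matrix.gram ℝ fun i => prodEquivEuclidean m n (v i)).det ≠ 0 := by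
  rw [Matrix.det_gram_ne_zero_iff_linearIndependent]
  exact ((prodEquivEuclidean m n).toLinearMap.linearIndependent_iff
    (prodEquivEuclidean m n).ker).symm

end ProdEuclidean

theorem add_add_mul_eq_zero_iff {R : Type*} [Semiring R] [PartialOrder R] [IsOrderedRing R]
    {p q : R} (hp : 0 ≤ p) (hq : 0 ≤ q) : p + q + p * q = 0 ↔ p = 0 ∧ q = 0 := by
  rw [add_eq_zero_iff_of_nonneg (add_nonneg hp hq) (mul_nonneg hp hq),
    add_eq_zero_iff_of_nonneg hp hq, and_iff_left_iff_imp]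
  rintro ⟨rfl, -⟩
  exact zero_mul q

section Gradients

variable (x y : Fin 3 → ℝ)

theorem grad_mu_zero : grad (mu 0) x y = (![-x 0, 0, 1], ![-y 0, 0, 0]) := by
  ext k <;> fin_cases k <;> simp [grad, pdx, pdy, mu, Function.update]

theorem grad_mu_one : grad (mu 1) x y = (![0, -x 1, 1], ![0, -y 1, 0]) := by
  ext k <;> fin_cases k <;> simp [grad, pdx, pdy, mu, Function.update]

theorem mu_two_apply : mu 2 x y =
    Real.exp (x 2) * ((x 0 * y 1 + x 1 * y 0) * Real.cos (y 2) +
      (x 0 * x 1 - y 0 * y 1) * Real.sin (y 2)) :=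
  rfl

theorem grad_mu_two : grad (mu 2) x y =
    (![Real.exp (x 2) * (y 1 * Real.cos (y 2) + x 1 * Real.sin (y 2)),
       Real.exp (x 2) * (y 0 * Real.cos (y 2) + x 0 * Real.sin (y 2)),
       mu 2 x y],
     ![Real.exp (x 2) * (x 1 * Real.cos (y 2) - y 1 * Real.sin (y 2)),
       Real.exp (x 2) * (x 0 * Real.cos (y 2) - y 0 * Real.sin (y 2)),
       Real.exp (x 2) * ((x 0 * x 1 - y 0 * y 1) * Real.cos (y 2)
          - (x 0 * y 1 + x 1 * y 0) * Real.sin (y 2))]) := by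
  ext k <;> fin_cases k <;>
    simp (disch := fun_prop) [grad, pdx, pdy, mu, Function.update, deriv_fun_add, deriv_fun_sub,
      ← sub_eq_add_neg, neg_add_eq_sub]

/-- The gradient `grad f` as a vector of Euclidean `ℝ⁶`, so that gradients have inner products. -/
noncomputable def euclideanGrad (f : (Fin 3 → ℝ) → (Fin 3 → ℝ) → ℝ) (x y : Fin 3 → ℝ) :
    EuclideanSpace ℝ (Fin 3 ⊕ Fin 3) :=
  prodEquivEuclidean (Fin 3) (Fin 3) (grad f x y)

theorem inner_euclideanGrad (f g : (Fin 3 → ℝ) → (Fin 3 → ℝ) → ℝ) :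
    inner ℝ (euclideanGrad f x y) (euclideanGrad g x y) =
      (grad f x y).1 ⬝ᵥ (grad g x y).1 + (grad f x y).2 ⬝ᵥ (grad g x y).2 :=
  inner_prodEquivEuclidean _ _

theorem linearIndependent_grad_iff_det_gram_euclideanGrad_ne_zero {ι : Type*} [Fintype ι]
    [DecidableEq ι] (f : ι → (Fin 3 → ℝ) → (Fin 3 → ℝ) → ℝ) :
    LinearIndependent ℝ (fun i => grad (f i) x y) ↔
      (Matrix.gram ℝ fun i => euclideanGrad (f i) x y).det ≠ 0 :=
  linearIndependent_iff_det_gram_prodEquivEuclidean_ne_zero _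

theorem inner_euclideanGrad_mu_zero_self :
    inner ℝ (euclideanGrad (mu 0) x y) (euclideanGrad (mu 0) x y) =
      1 + (x 0 ^ 2 + y 0 ^ 2) := by
  simp only [inner_euclideanGrad, grad_mu_zero, Matrix.vec3_dotProduct']
  ring

theorem inner_euclideanGrad_mu_one_self :
    inner ℝ (euclideanGrad (mu 1) x y) (euclideanGrad (mu 1) x y) =
      1 + (x 1 ^ 2 + y 1 ^ 2) := by
  simp only [inner_euclideanGrad, grad_mu_one, Matrix.vec3_dotProduct']
  ring

theorem inner_euclideanGrad_mu_two_self :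
    inner ℝ (euclideanGrad (mu 2) x y) (euclideanGrad (mu 2) x y) =
      Real.exp (x 2) ^ 2 * ((x 0 ^ 2 + y 0 ^ 2) + (x 1 ^ 2 + y 1 ^ 2) +
        (x 0 ^ 2 + y 0 ^ 2) * (x 1 ^ 2 + y 1 ^ 2)) := by
  simp only [inner_euclideanGrad, grad_mu_two, Matrix.vec3_dotProduct', mu_two_apply]
  linear_combination Real.exp (x 2) ^ 2 * ((x 0 ^ 2 + y 0 ^ 2) + (x 1 ^ 2 + y 1 ^ 2) +
    (x 0 ^ 2 + y 0 ^ 2) * (x 1 ^ 2 + y 1 ^ 2)) * Real.sin_sq_add_cos_sq (y 2)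

theorem inner_euclideanGrad_mu_zero_one :
    inner ℝ (euclideanGrad (mu 0) x y) (euclideanGrad (mu 1) x y) = 1 := by
  simp only [inner_euclideanGrad, grad_mu_zero, grad_mu_one, Matrix.vec3_dotProduct']
  ring

theorem inner_euclideanGrad_mu_zero_two :
    inner ℝ (euclideanGrad (mu 0) x y) (euclideanGrad (mu 2) x y) = 0 := by
  simp only [inner_euclideanGrad, grad_mu_zero, grad_mu_two, Matrix.vec3_dotProduct',
    mu_two_apply]
  ring

theorem inner_euclideanGrad_mu_one_two :
    inner ℝ (euclideanGrad (mu 1) x y) (euclideanGrad (mu 2) x y) = 0 := by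
  simp only [inner_euclideanGrad, grad_mu_one, grad_mu_two, Matrix.vec3_dotProduct',
    mu_two_apply]
  ring

theorem det_gram_euclideanGrad_mu :
    (Matrix.gram ℝ fun i => euclideanGrad (mu i) x y).det =
      Real.exp (x 2) ^ 2 * ((x 0 ^ 2 + y 0 ^ 2) + (x 1 ^ 2 + y 1 ^ 2) +
        (x 0 ^ 2 + y 0 ^ 2) * (x 1 ^ 2 + y 1 ^ 2)) ^ 2 := by
  have inner_symm (i j : Fin 3) :
      inner ℝ (euclideanGrad (mu i) x y) (euclideanGrad (mu j) x y) =
        inner ℝ (euclideanGrad (mu j) x y) (euclideanGrad (mu i) x y) :=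
    real_inner_comm _ _
  simp only [Matrix.det_fin_three, Matrix.gram_apply, inner_symm 1 0, inner_symm 2 0,
    inner_symm 2 1, inner_euclideanGrad_mu_zero_self, inner_euclideanGrad_mu_one_self,
    inner_euclideanGrad_mu_two_self, inner_euclideanGrad_mu_zero_one,
    inner_euclideanGrad_mu_zero_two, inner_euclideanGrad_mu_one_two]
  ring

theorem linearIndependent_grad_mu_iff :
    LinearIndependent ℝ (fun i => grad (mu i) x y) ↔
      (x 0 ^ 2 + y 0 ^ 2) + (x 1 ^ 2 + y 1 ^ 2) +
        (x 0 ^ 2 + y 0 ^ 2) * (x 1 ^ 2 + y 1 ^ 2) ≠ 0 := by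
  rw [linearIndependent_grad_iff_det_gram_euclideanGrad_ne_zero, det_gram_euclideanGrad_mu,
    mul_ne_zero_iff_left (pow_ne_zero 2 (Real.exp_ne_zero _)), pow_ne_zero_iff two_ne_zero]

end Gradients

/-- The gradients `∇μ₁, ∇μ₂, ∇μ₃ ∈ ℝ⁶` are linearly independent at
`z = (z₁, z₂, z₃)` (equivalently `D(μ₁,μ₂,μ₃)` is surjective there) if and only if
`(z₁, z₂) ≠ (0, 0)`. -/
theorem gradients_linearly_independent_iff (x y : Fin 3 → ℝ) :
    LinearIndependent ℝ ![grad (mu 0) x y, grad (mu 1) x y, grad (mu 2) x y] ↔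
      (((x 0 : ℂ) + (y 0 : ℂ) * Complex.I, (x 1 : ℂ) + (y 1 : ℂ) * Complex.I)
        ≠ ((0 : ℂ), (0 : ℂ))) := by
  have family_eq : ![grad (mu 0) x y, grad (mu 1) x y, grad (mu 2) x y] =
      fun i => grad (mu i) x y := by
    ext i : 1
    fin_cases i <;> rfl
  rw [family_eq, linearIndependent_grad_mu_iff, ← normSq_add_mul_I, ← normSq_add_mul_I, Ne,
    add_add_mul_eq_zero_iff (normSq_nonneg _) (normSq_nonneg _), normSq_eq_zero, normSq_eq_zero,
    Ne, Prod.mk_inj]
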